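/- Let δ₁ be an n₁×n₁ matrix and δ₂ an n₂×n₂ matrix over ℤ₂ with δ₁·δ₁ = 0 and δ₂·δ₂ = 0, and let ∂ = δ₁ ⊗ 1 + 1 ⊗ δ₂. Suppose every Z-logical operator of δ₁ has Hamming weight at least d₁ and every Z-logical operator of δ₂ has Hamming weight at least d₂. Then every Z-logical operator of ∂ (every vector w with ∂·w = 0 that is not in the column space of ∂) has Hamming weight at least max(d₁, d₂). -/

import Mathlib

open Matrix

/-- Every square matrix over a field has a generalized inverse. -/
theorem Matrix.exists_mul_mul_eq_self {n K : Type*} [Fintype n] [DecidableEq n] [Field K]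
    (A : Matrix n n K) : ∃ E : Matrix n n K, A * E * A = A := by
  obtain ⟨g, hg⟩ := (toLin' A).rangeRestrict.exists_rightInverse_of_surjective
    (toLin' A).range_rangeRestrict
  obtain ⟨e, he⟩ := LinearMap.exists_extend g
  refine ⟨LinearMap.toMatrix' e, toLin'.injective (LinearMap.ext fun x => ?_)⟩
  have hex : e (toLin' A x) = g ((toLin' A).rangeRestrict x) :=
    LinearMap.congr_fun he ((toLin' A).rangeRestrict x)
  have hgx := congrArg Subtype.val (LinearMap.congr_fun hg ((toLin' A).rangeRestrict x))
  rw [toLin'_mul, toLin'_mul, toLin'_toMatrix']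
  simp only [LinearMap.comp_apply, hex]
  exact hgx

/-- A chain map over a field, from a square-zero operator, that sends cycles to boundaries is
null-homotopic. -/
theorem Matrix.exists_homotopy_of_mulVec_mem_range {m n K : Type*} [Fintype m] [DecidableEq m]
    [Fintype n] [DecidableEq n] [Field K] {A : Matrix m m K} {D : Matrix n n K}
    {W : Matrix m n K} (hD : D * D = 0) (hW : A * W = W * D)
    (h : ∀ f, D *ᵥ f = 0 → W *ᵥ f ∈ Set.range A.mulVec) :
    ∃ S : Matrix m n K, W = A * S + S * D := by
  obtain ⟨B, hB⟩ := A.exists_mul_mul_eq_self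
  obtain ⟨E, hE⟩ := D.exists_mul_mul_eq_self
  have hDP : D * (1 - E * D) = 0 := by
    rw [Matrix.mul_sub, Matrix.mul_one, ← Matrix.mul_assoc, hE, sub_self]
  have hlift : A * (B * (W * (1 - E * D))) = W * (1 - E * D) := by
    refine ext_of_mulVec_single fun j => ?_
    obtain ⟨y, hy⟩ := h ((1 - E * D) *ᵥ Pi.single j 1) (by
      rw [mulVec_mulVec, hDP, zero_mulVec])
    rw [← Matrix.mul_assoc, ← mulVec_mulVec, ← mulVec_mulVec _ W, ← hy, mulVec_mulVec, hB]
  obtain ⟨S, hS⟩ : ∃ S, S = B * (W * (1 - E * D)) := ⟨_, rfl⟩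
  rw [← hS] at hlift
  have hED (X : Matrix m n K) : X * D * E * D = X * D := by
    rw [Matrix.mul_assoc X, Matrix.mul_assoc X, hE]
  have hDD (X : Matrix m n K) : X * D * D = 0 := by
    rw [Matrix.mul_assoc, hD, Matrix.mul_zero]
  have hAS : A * S = W - W * E * D := by
    rw [hlift, Matrix.mul_sub, Matrix.mul_one, Matrix.mul_assoc]
  have hAT : A * ((W * E * D - S * D) * E) = 0 := by
    simp only [← Matrix.mul_assoc, Matrix.mul_sub, Matrix.sub_mul, hAS, hW, hED, hDD,
      sub_zero, sub_self]
  have hTD : (W * E * D - S * D) * E * D = W * E * D - S * D := by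
    rw [← Matrix.sub_mul, hED]
  exact ⟨S + (W * E * D - S * D) * E, by
    rw [Matrix.mul_add, Matrix.add_mul, hAS, hAT, hTD]; abel⟩

/-- A matrix representing a nontrivial class of the product complex has at least as many nonzero
entries as the minimum weight of a nontrivial cycle of the left factor. -/
theorem Matrix.le_card_support_of_not_homotopic {m n K : Type*} [Fintype m] [DecidableEq m]
    [Fintype n] [DecidableEq n] [Field K] [DecidableEq K] {A : Matrix m m K} {D : Matrix n n K}
    {W : Matrix m n K} (hD : D * D = 0) (hW : A * W = W * D) {d : ℕ}
    (hd : ∀ v : m → K, A *ᵥ v = 0 → v ∉ Set.range A.mulVec →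
      d ≤ (Finset.univ.filter fun i => v i ≠ 0).card)
    (hlog : ¬ ∃ S : Matrix m n K, W = A * S + S * D) :
    d ≤ (Finset.univ.filter fun p : m × n => W p.1 p.2 ≠ 0).card := by
  obtain ⟨f, hf, hWf⟩ : ∃ f, D *ᵥ f = 0 ∧ W *ᵥ f ∉ Set.range A.mulVec := by
    by_contra! h
    exact hlog (exists_homotopy_of_mulVec_mem_range hD hW h)
  have hcycle : A *ᵥ (W *ᵥ f) = 0 := by
    rw [mulVec_mulVec, hW, ← mulVec_mulVec, hf, mulVec_zero]
  refine (hd _ hcycle hWf).trans (le_trans (Finset.card_le_card fun i hi => ?_)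
    (Finset.card_image_le (f := Prod.fst)))
  obtain ⟨j, -, hj⟩ := Finset.exists_ne_zero_of_sum_ne_zero (Finset.mem_filter.1 hi).2
  exact Finset.mem_image.2 ⟨(i, j), by simpa using left_ne_zero_of_mul hj, rfl⟩

/-- The Z-distance of the homological product code is at least
`max(d₁, d₂)`: every Z-logical operator of `∂ = δ₁ ⊗ 1 + 1 ⊗ δ₂` has Hamming
weight at least `max(d₁, d₂)`, where `dᵢ` lower-bounds the weight of Z-logical
operators of `δᵢ`. -/
theorem homological_product_Zdistance_lower_bound
    {n₁ n₂ : ℕ} (δ₁ : Matrix (Fin n₁) (Fin n₁) (ZMod 2))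
    (δ₂ : Matrix (Fin n₂) (Fin n₂) (ZMod 2))
    (h₁ : δ₁ * δ₁ = 0) (h₂ : δ₂ * δ₂ = 0)
    (bd : Matrix (Fin n₁ × Fin n₂) (Fin n₁ × Fin n₂) (ZMod 2))
    (hbd : ∀ p q : Fin n₁ × Fin n₂,
      bd p q = δ₁ p.1 q.1 * (if p.2 = q.2 then 1 else 0)
        + (if p.1 = q.1 then 1 else 0) * δ₂ p.2 q.2)
    (d₁ d₂ : ℕ)
    (hd₁ : ∀ v : Fin n₁ → ZMod 2, δ₁.mulVec v = 0 → v ∉ Set.range δ₁.mulVec →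
      d₁ ≤ (Finset.univ.filter fun i : Fin n₁ => v i ≠ 0).card)
    (hd₂ : ∀ v : Fin n₂ → ZMod 2, δ₂.mulVec v = 0 → v ∉ Set.range δ₂.mulVec →
      d₂ ≤ (Finset.univ.filter fun j : Fin n₂ => v j ≠ 0).card)
    (w : Fin n₁ × Fin n₂ → ZMod 2)
    (hker : bd.mulVec w = 0) (hlog : w ∉ Set.range bd.mulVec) :
    max d₁ d₂ ≤ (Finset.univ.filter fun p : Fin n₁ × Fin n₂ => w p ≠ 0).card := by
  have hmul (u : Fin n₁ × Fin n₂ → ZMod 2) (i : Fin n₁) (j : Fin n₂) :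
      bd.mulVec u (i, j) = (δ₁ * of (Function.curry u) + of (Function.curry u) * δ₂ᵀ) i j := by
    simp [mulVec, dotProduct, hbd, Fintype.sum_prod_type, add_mul, Finset.sum_add_distrib,
      mul_apply, mul_comm]
  obtain ⟨W, hWdef⟩ : ∃ W : Matrix (Fin n₁) (Fin n₂) (ZMod 2), W = of (Function.curry w) :=
    ⟨_, rfl⟩
  have hW : δ₁ * W = W * δ₂ᵀ := by
    ext i j
    have h := (hmul w i j).symm.trans (congrFun hker (i, j))
    rw [← hWdef] at h
    exact CharTwo.add_eq_zero.1 h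
  have hnot : ¬ ∃ S : Matrix (Fin n₁) (Fin n₂) (ZMod 2), W = δ₁ * S + S * δ₂ᵀ := by
    rintro ⟨S, hS⟩
    refine hlog ⟨fun p => S p.1 p.2, funext fun ⟨i, j⟩ => ?_⟩
    rw [hmul]
    exact (congrFun₂ hS i j).symm.trans (congrFun₂ hWdef i j)
  have hleft := le_card_support_of_not_homotopic
    (by rw [← transpose_mul, h₂, transpose_zero]) hW hd₁ hnot
  have hright := le_card_support_of_not_homotopic (W := Wᵀ) (D := δ₁ᵀ)
    (by rw [← transpose_mul, h₁, transpose_zero])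
    (by simpa using (congrArg transpose hW).symm) hd₂ (by
      rintro ⟨S, hS⟩
      exact hnot ⟨Sᵀ, by simpa [add_comm] using congrArg transpose hS⟩)
  subst hWdef
  refine max_le hleft (hright.trans_eq ?_)
  exact Finset.card_equiv (Equiv.prodComm _ _) fun p => by
    simp only [Finset.mem_filter_univ]; rfl
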